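/- Suppose (a_n)_{n≥1} is a nondecreasing sequence of nonnegative reals with ∑ a_n x^n convergent for |x| < 1, and for some α > 1 and A ≥ 0, ∑_{n=1}^∞ a_n x^n ~ A/(1-x)^α as x ↑ 1. Then a_n ~ (Aα/Γ(α+1))·n^{α-1} as n → ∞. -/

import Mathlib

open Filter Real

/-!
This is Karamata's proof in probabilistic form. Put `b k = a (k + 1)`, `L s = ∑ b k e^{-s(k+1)}`
and `N = n + 1`, and consider the probability with mass proportional to `b k e^{-(k+1)/N}` at
`(k + 1) / N`. Its moment generating function at `-m` is `L ((m + 1) / N) / L (1 / N)`, which tends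
to `(m + 1)^{-α}`, the one of the Gamma distribution of shape `α` and rate `1`. These are the
moments of `e^{-x} ∈ [0, 1]`, and by Weierstrass' theorem moments determine weak limits on a compact
interval. Hence the mass of the block `c N < k + 1 ≤ d N` tends to the Gamma mass of `(c, d]`.
As `b` is monotone, `b n` is at most its average over a block just above `n` and at least its
average over a block just below. Letting the blocks shrink, `N b n / L (1 / N)` tends to `e` times
the Gamma density at `1`, that is to `1 / Γ(α)`.
-/

open MeasureTheory ProbabilityTheory Set Topology Asymptotics

section Moments

lemma integrable_of_ae_mem_Icc {μ : Measure ℝ} [IsFiniteMeasure μ] {a b : ℝ} {f : ℝ → ℝ}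
    (hμ : ∀ᵐ x ∂μ, x ∈ Icc a b) (hf : Continuous f) : Integrable f μ := by
  rw [← Measure.restrict_eq_self_of_ae_mem hμ]
  exact hf.integrableOn_Icc

lemma abs_integral_sub_integral_le_of_forall_mem_Icc {μ : Measure ℝ} [IsProbabilityMeasure μ]
    {a b ε : ℝ} {f g : ℝ → ℝ} (hμ : ∀ᵐ x ∂μ, x ∈ Icc a b) (hf : Continuous f)
    (hg : Continuous g) (hfg : ∀ x ∈ Icc a b, |f x - g x| ≤ ε) :
    |∫ x, f x ∂μ - ∫ x, g x ∂μ| ≤ ε := by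
  rw [← integral_sub (integrable_of_ae_mem_Icc hμ hf) (integrable_of_ae_mem_Icc hμ hg),
    ← Real.norm_eq_abs]
  simpa using norm_integral_le_of_norm_le_const (f := fun x => f x - g x) (hμ.mono hfg)

variable {ι : Type*} {l : Filter ι} {μ : ι → ProbabilityMeasure ℝ} {μ₀ : ProbabilityMeasure ℝ}
  {a b : ℝ}

lemma tendsto_integral_eval_of_tendsto_moments
    (hμ : ∀ i, ∀ᵐ x ∂(μ i : Measure ℝ), x ∈ Icc a b)
    (hμ₀ : ∀ᵐ x ∂(μ₀ : Measure ℝ), x ∈ Icc a b)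
    (h : ∀ m : ℕ, Tendsto (fun i => ∫ x, x ^ m ∂(μ i : Measure ℝ)) l
      (𝓝 (∫ x, x ^ m ∂(μ₀ : Measure ℝ)))) (p : Polynomial ℝ) :
    Tendsto (fun i => ∫ x, p.eval x ∂(μ i : Measure ℝ)) l
      (𝓝 (∫ x, p.eval x ∂(μ₀ : Measure ℝ))) := by
  have integral_eval {ν : ProbabilityMeasure ℝ} (hν : ∀ᵐ x ∂(ν : Measure ℝ), x ∈ Icc a b) :
      ∫ x, p.eval x ∂(ν : Measure ℝ)
        = ∑ m ∈ Finset.range (p.natDegree + 1), p.coeff m * ∫ x, x ^ m ∂(ν : Measure ℝ) := by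
    simp_rw [Polynomial.eval_eq_sum_range, ← integral_const_mul]
    exact integral_finsetSum _ fun m _ => integrable_of_ae_mem_Icc hν (by fun_prop)
  simp_rw [integral_eval (hμ _), integral_eval hμ₀]
  exact tendsto_finsetSum _ fun m _ => (h m).const_mul _

theorem tendsto_probabilityMeasure_of_tendsto_moments
    (hμ : ∀ i, ∀ᵐ x ∂(μ i : Measure ℝ), x ∈ Icc a b)
    (hμ₀ : ∀ᵐ x ∂(μ₀ : Measure ℝ), x ∈ Icc a b)
    (h : ∀ m : ℕ, Tendsto (fun i => ∫ x, x ^ m ∂(μ i : Measure ℝ)) l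
      (𝓝 (∫ x, x ^ m ∂(μ₀ : Measure ℝ)))) :
    Tendsto μ l (𝓝 μ₀) := by
  refine ProbabilityMeasure.tendsto_iff_forall_integral_tendsto.2 fun f => ?_
  refine Metric.tendsto_nhds.2 fun ε hε => ?_
  obtain ⟨p, hp⟩ :=
    exists_polynomial_near_of_continuousOn a b f f.continuous.continuousOn (ε / 3) (by positivity)
  have near {ν : ProbabilityMeasure ℝ} (hν : ∀ᵐ x ∂(ν : Measure ℝ), x ∈ Icc a b) :
      |∫ x, p.eval x ∂(ν : Measure ℝ) - ∫ x, f x ∂(ν : Measure ℝ)| ≤ ε / 3 :=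
    abs_integral_sub_integral_le_of_forall_mem_Icc hν p.continuous f.continuous
      fun x hx => (hp x hx).le
  filter_upwards [Metric.tendsto_nhds.1 (tendsto_integral_eval_of_tendsto_moments hμ hμ₀ h p)
    (ε / 3) (by positivity)] with i hi
  have near_i := abs_le.1 (near (hμ i))
  have near_limit := abs_le.1 (near hμ₀)
  rw [Real.dist_eq, abs_lt] at hi ⊢
  constructor <;> linarith [near_i.1, near_i.2, near_limit.1, near_limit.2, hi.1, hi.2]

end Moments

section Laplace

lemma nullSingletonClass_map_of_injective {Ω Ω' : Type*} [MeasurableSpace Ω] [MeasurableSpace Ω']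
    [MeasurableSingletonClass Ω'] {μ : Measure Ω} [NullSingletonClass μ] {f : Ω → Ω'}
    (hf : Measurable f) (hinj : f.Injective) : NullSingletonClass (μ.map f) where
  measure_singleton y := by
    rw [Measure.map_apply hf (measurableSet_singleton y)]
    exact (subsingleton_singleton.preimage hinj).measure_zero μ

lemma measure_frontier_Ico (μ : Measure ℝ) [NullSingletonClass μ] (a b : ℝ) :
    μ (frontier (Ico a b)) = 0 := by
  rcases lt_or_ge a b with hab | hba
  · rw [frontier_Ico hab]
    exact (Set.toFinite {a, b}).measure_zero μ
  · simp [Ico_eq_empty hba.not_gt]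

lemma integral_pow_map_exp_neg (μ : Measure ℝ) (m : ℕ) :
    ∫ y, y ^ m ∂μ.map (fun x => rexp (-x)) = mgf id μ (-m) := by
  rw [integral_map (by fun_prop) (by fun_prop)]
  simp [mgf, ← exp_nat_mul]

lemma ae_mem_Icc_map_exp_neg {μ : Measure ℝ} (hμ : ∀ᵐ x ∂μ, 0 ≤ x) :
    ∀ᵐ y ∂μ.map (fun x => rexp (-x)), y ∈ Icc 0 1 :=
  (ae_map_iff (by fun_prop) measurableSet_Icc).2 <|
    hμ.mono fun _ hx => ⟨(exp_pos _).le, exp_le_one_iff.2 (neg_nonpos.2 hx)⟩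

lemma measureReal_map_exp_neg_Ico (μ : Measure ℝ) (c d : ℝ) :
    (μ.map fun x => rexp (-x)).real (Ico (rexp (-d)) (rexp (-c))) = μ.real (Ioc c d) := by
  rw [map_measureReal_apply (by fun_prop) measurableSet_Ico]
  congr 1
  ext x
  simp [and_comm]

theorem tendsto_measureReal_Ioc_of_tendsto_mgf {ι : Type*} {l : Filter ι} {μ : ι → Measure ℝ}
    [∀ i, IsProbabilityMeasure (μ i)] {μ₀ : Measure ℝ} [IsProbabilityMeasure μ₀]
    [NullSingletonClass μ₀] (hμ : ∀ i, ∀ᵐ x ∂μ i, 0 ≤ x) (hμ₀ : ∀ᵐ x ∂μ₀, 0 ≤ x)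
    (h : ∀ m : ℕ, Tendsto (fun i => mgf id (μ i) (-m)) l (𝓝 (mgf id μ₀ (-m)))) (c d : ℝ) :
    Tendsto (fun i => (μ i).real (Ioc c d)) l (𝓝 (μ₀.real (Ioc c d))) := by
  let expNeg (ν : Measure ℝ) [IsProbabilityMeasure ν] : ProbabilityMeasure ℝ :=
    ⟨ν.map fun x => rexp (-x), Measure.isProbabilityMeasure_map (by fun_prop)⟩
  have weak : Tendsto (fun i => expNeg (μ i)) l (𝓝 (expNeg μ₀)) :=
    tendsto_probabilityMeasure_of_tendsto_moments
      (fun i => ae_mem_Icc_map_exp_neg (hμ i)) (ae_mem_Icc_map_exp_neg hμ₀)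
      (by simpa only [expNeg, ProbabilityMeasure.coe_mk, integral_pow_map_exp_neg] using h)
  have null_singletons : NullSingletonClass (expNeg μ₀ : Measure ℝ) :=
    nullSingletonClass_map_of_injective (by fun_prop) (exp_injective.comp neg_injective)
  have conv := ProbabilityMeasure.tendsto_measure_of_null_frontier_of_tendsto weak <|
    (ProbabilityMeasure.null_iff_toMeasure_null _ _).2 <|
      measure_frontier_Ico (expNeg μ₀) (rexp (-d)) (rexp (-c))
  simp_rw [← measureReal_map_exp_neg_Ico]
  exact NNReal.tendsto_coe.2 conv

end Laplace

section Gamma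

variable {α r : ℝ}

lemma ae_nonneg_gammaMeasure (α r : ℝ) : ∀ᵐ x ∂gammaMeasure α r, 0 ≤ x := by
  refine (ae_withDensity_iff (by unfold gammaPDF; fun_prop)).2 (ae_of_all _ fun x hx => ?_)
  contrapose! hx
  exact gammaPDF_of_neg hx

instance nullSingletonClass_gammaMeasure (α r : ℝ) : NullSingletonClass (gammaMeasure α r) :=
  nullSingletonClass_withDensity _

lemma mgf_id_gammaMeasure (hα : 0 < α) (hr : 0 < r) {t : ℝ} (ht : t < r) :
    mgf id (gammaMeasure α r) t = (r / (r - t)) ^ α := by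
  have density_mul_exp : (Ioi (0 : ℝ)).EqOn (fun x => gammaPDFReal α r x * rexp (t * x))
      fun x => r ^ α / Gamma α * (x ^ (α - 1) * rexp (-((r - t) * x))) := fun x hx => by
    have exponents : -((r - t) * x) = -(r * x) + t * x := by ring
    simp only [gammaPDFReal, if_pos (mem_Ioi.1 hx).le, exponents, exp_add]
    ring
  calc mgf id (gammaMeasure α r) t
      = ∫ x, gammaPDFReal α r x * rexp (t * x) := by
        rw [mgf, gammaMeasure, integral_withDensity_eq_integral_toReal_smul
          (by unfold gammaPDF; fun_prop) (by simp [gammaPDF])]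
        simp [gammaPDF, gammaPDFReal_nonneg hα hr]
    _ = ∫ x in Ioi 0, gammaPDFReal α r x * rexp (t * x) := by
        rw [← integral_Ici_eq_integral_Ioi, setIntegral_eq_integral_of_forall_compl_eq_zero]
        intro x hx
        simp [gammaPDFReal, if_neg (notMem_Ici.1 hx).not_ge]
    _ = (r / (r - t)) ^ α := by
        rw [setIntegral_congr_fun measurableSet_Ioi density_mul_exp, integral_const_mul,
          integral_rpow_mul_exp_neg_mul_Ioi hα (sub_pos.2 ht), div_rpow hr.le (sub_pos.2 ht).le,
          div_rpow zero_le_one (sub_pos.2 ht).le, one_rpow]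
        field_simp [(Gamma_pos_of_pos hα).ne']

lemma measureReal_gammaMeasure_Ioc (hα : 0 < α) (hr : 0 < r) {c d : ℝ} (hcd : c ≤ d) :
    (gammaMeasure α r).real (Ioc c d) = ∫ x in c..d, gammaPDFReal α r x := by
  rw [intervalIntegral.integral_of_le hcd, measureReal_def, gammaMeasure,
    withDensity_apply _ measurableSet_Ioc,
    integral_eq_lintegral_of_nonneg_ae (ae_of_all _ (gammaPDFReal_nonneg hα hr)) (by fun_prop)]
  rfl

lemma continuousAt_gammaPDFReal (α r : ℝ) {x : ℝ} (hx : 0 < x) :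
    ContinuousAt (gammaPDFReal α r) x := by
  have formula : ContinuousAt (fun y => r ^ α / Gamma α * y ^ (α - 1) * rexp (-(r * y))) x := by
    fun_prop (disch := exact Or.inl hx.ne')
  exact formula.congr <| (eventually_gt_nhds hx).mono fun y hy => (if_pos hy.le).symm

lemma tendsto_exp_mul_slope_gammaPDFReal (α : ℝ) :
    Tendsto (fun t => rexp t * slope (fun u => ∫ x in 1..u, gammaPDFReal α 1 x) 1 t) (𝓝[≠] 1)
      (𝓝 (Gamma α)⁻¹) := by
  have deriv_integral : HasDerivAt (fun u => ∫ x in 1..u, gammaPDFReal α 1 x)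
      (gammaPDFReal α 1 1) 1 :=
    intervalIntegral.integral_hasDerivAt_right .refl
      (measurable_gammaPDFReal α 1).stronglyMeasurable.stronglyMeasurableAtFilter
      (continuousAt_gammaPDFReal α 1 one_pos)
  convert (continuous_exp.continuousAt.mono_left nhdsWithin_le_nhds).mul
    (hasDerivAt_iff_tendsto_slope.1 deriv_integral) using 2
  rw [gammaPDFReal, if_pos zero_le_one, one_rpow, one_rpow, mul_one, mul_one, exp_neg]
  field_simp

end Gamma

section Karamata

variable {Ω : Type*} [MeasurableSpace Ω]

lemma mgf_tilted_mul (X : Ω → ℝ) (ν : Measure Ω) (s t : ℝ) :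
    mgf X (ν.tilted (s * X ·)) t = mgf X ν (s + t) / mgf X ν s := by
  simp only [mgf, integral_exp_tilted, Pi.add_apply, add_mul]

theorem tendsto_tilted_real_Ioc_of_tendsto_mgf_div {ν : Measure Ω} [NeZero ν] {X : Ω → ℝ}
    (hX : Measurable X) (hX0 : ∀ᵐ ω ∂ν, 0 ≤ X ω) {ι : Type*} {l : Filter ι} {s : ι → ℝ}
    (hs : ∀ i, 0 ≤ s i) (hint : ∀ i, Integrable (fun ω => rexp (-s i * X ω)) ν) {α : ℝ} (hα : 0 < α)
    (hmgf : ∀ m : ℕ, Tendsto (fun i => mgf X ν (-((m + 1) * s i)) / mgf X ν (-s i)) l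
      (𝓝 ((m + 1 : ℝ) ^ (-α)))) (c d : ℝ) :
    Tendsto (fun i => (ν.tilted (-s i * X ·)).real {ω | s i * X ω ∈ Ioc c d}) l
      (𝓝 ((gammaMeasure α 1).real (Ioc c d))) := by
  have := isProbabilityMeasure_gammaMeasure hα one_pos
  have (i : ι) : IsProbabilityMeasure (ν.tilted (-s i * X ·)) :=
    isProbabilityMeasure_tilted (hint i)
  let law (i : ι) : Measure ℝ := (ν.tilted (-s i * X ·)).map (s i * X ·)
  have (i : ι) : IsProbabilityMeasure (law i) := Measure.isProbabilityMeasure_map (by fun_prop)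
  have law_nonneg (i : ι) : ∀ᵐ x ∂law i, 0 ≤ x :=
    (ae_map_iff (by fun_prop) measurableSet_Ici).2 <|
      (tilted_absolutelyContinuous ν _).ae_le <| hX0.mono fun _ hω => mul_nonneg (hs i) hω
  have mgf_law (i : ι) (m : ℕ) :
      mgf id (law i) (-m) = mgf X ν (-((m + 1) * s i)) / mgf X ν (-s i) := by
    rw [mgf_id_map (by fun_prop), mgf_const_mul, mgf_tilted_mul]
    ring_nf
  have law_Ioc (i : ι) :
      (law i).real (Ioc c d) = (ν.tilted (-s i * X ·)).real {ω | s i * X ω ∈ Ioc c d} :=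
    map_measureReal_apply (by fun_prop) measurableSet_Ioc
  have mgf_gamma (m : ℕ) : mgf id (gammaMeasure α 1) (-m) = (m + 1 : ℝ) ^ (-α) := by
    rw [mgf_id_gammaMeasure hα one_pos (neg_nonpos.2 m.cast_nonneg |>.trans_lt one_pos),
      sub_neg_eq_add, add_comm, one_div, inv_rpow (by positivity), rpow_neg (by positivity)]
  simp_rw [← law_Ioc]
  refine tendsto_measureReal_Ioc_of_tendsto_mgf law_nonneg (ae_nonneg_gammaMeasure α 1)
    (fun m => ?_) c d
  simpa only [mgf_law, mgf_gamma] using hmgf m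

end Karamata

section Series

/-- The measure on `ℕ` with mass `b k` at `k`, for a nonnegative sequence `b`. -/
noncomputable def weightedCount (b : ℕ → ℝ) : Measure ℕ :=
  Measure.count.withDensity fun k => ENNReal.ofReal (b k)

/-- The Laplace transform `s ↦ ∑ b k e^{-s(k+1)}` of the measure with mass `b k` at `k + 1`. -/
noncomputable def laplaceSum (b : ℕ → ℝ) (s : ℝ) : ℝ :=
  ∑' k, b k * rexp (-s * (k + 1))

variable {b : ℕ → ℝ}

lemma weightedCount_real_singleton (hb : ∀ k, 0 ≤ b k) (k : ℕ) :
    (weightedCount b).real {k} = b k := by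
  simp [weightedCount, measureReal_def, withDensity_apply, hb k]

lemma integrable_weightedCount_iff (hb : ∀ k, 0 ≤ b k) {f : ℕ → ℝ} :
    Integrable f (weightedCount b) ↔ Summable fun k => b k * f k := by
  rw [weightedCount, integrable_withDensity_iff_integrable_smul' (by fun_prop) (by simp),
    integrable_count_iff, summable_norm_iff]
  simp [hb]

lemma integral_weightedCount (hb : ∀ k, 0 ≤ b k) {f : ℕ → ℝ} (hf : Summable fun k => b k * f k) :
    ∫ k, f k ∂weightedCount b = ∑' k, b k * f k := by
  simp [integral_countable ((integrable_weightedCount_iff hb).2 hf),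
    weightedCount_real_singleton hb]

lemma tilted_weightedCount_real (hb : ∀ k, 0 ≤ b k) {f : ℕ → ℝ}
    (hf : Summable fun k => b k * rexp (f k)) (S : Finset ℕ) :
    ((weightedCount b).tilted f).real S
      = (∑ k ∈ S, b k * rexp (f k)) / ∑' k, b k * rexp (f k) := by
  have hint := (integrable_weightedCount_iff hb).2 hf
  rw [measureReal_def, tilted_apply_eq_ofReal_integral' _ S.measurableSet,
    ENNReal.toReal_ofReal (by positivity), integral_div, integral_weightedCount hb hf,
    setIntegral_finset S hint.integrableOn]
  simp [weightedCount_real_singleton hb]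

lemma mem_Ico_floor_iff_inv_mul_mem_Ioc {c d N : ℝ} (hc : 0 ≤ c) (hd : 0 ≤ d) (hN : 0 < N)
    {k : ℕ} : k ∈ Finset.Ico ⌊c * N⌋₊ ⌊d * N⌋₊ ↔ N⁻¹ * (k + 1) ∈ Ioc c d := by
  have lower : ⌊c * N⌋₊ ≤ k ↔ c < N⁻¹ * (k + 1) := by
    rw [← Nat.lt_add_one_iff, Nat.floor_lt (by positivity), lt_inv_mul_iff₀' hN]
    push_cast
    rfl
  have upper : k < ⌊d * N⌋₊ ↔ N⁻¹ * (k + 1) ≤ d := by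
    rw [← Nat.add_one_le_iff, Nat.le_floor_iff (by positivity), inv_mul_le_iff₀' hN]
    push_cast
    rfl
  rw [Finset.mem_Ico, mem_Ioc, lower, upper]

lemma mgf_weightedCount (hb : ∀ k, 0 ≤ b k)
    {s : ℝ} (hs : Summable fun k : ℕ => b k * rexp (-s * (k + 1))) :
    mgf (fun k : ℕ => (k + 1 : ℝ)) (weightedCount b) (-s) = laplaceSum b s :=
  integral_weightedCount hb hs

lemma neZero_weightedCount (hb : ∀ k, 0 ≤ b k) {s : ℝ} (hs : laplaceSum b s ≠ 0) :
    NeZero (weightedCount b) := by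
  refine ⟨fun h => hs ?_⟩
  simp [laplaceSum, ← weightedCount_real_singleton hb, h]

lemma laplaceSum_nonneg (hb : ∀ k, 0 ≤ b k) (s : ℝ) : 0 ≤ laplaceSum b s :=
  tsum_nonneg fun k => mul_nonneg (hb k) (exp_pos _).le

lemma tendsto_inv_natCast_add_one_nhdsGT_zero :
    Tendsto (fun n : ℕ => (n + 1 : ℝ)⁻¹) atTop (𝓝[>] 0) :=
  tendsto_inv_atTop_nhdsGT_zero.comp
    (tendsto_atTop_add_const_right _ _ tendsto_natCast_atTop_atTop)

theorem tendsto_sum_Ico_floor_div_laplaceSum (hb : ∀ k, 0 ≤ b k)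
    (hsum : ∀ s > 0, Summable fun k : ℕ => b k * rexp (-s * (k + 1))) {α : ℝ} (hα : 0 < α)
    (hvar : ∀ m : ℕ, Tendsto (fun s => laplaceSum b ((m + 1) * s) / laplaceSum b s) (𝓝[>] 0)
      (𝓝 ((m + 1 : ℝ) ^ (-α)))) {c d : ℝ} (hc : 0 ≤ c) (hd : 0 ≤ d) :
    Tendsto (fun n : ℕ => (∑ k ∈ Finset.Ico ⌊c * (n + 1)⌋₊ ⌊d * (n + 1)⌋₊,
        b k * rexp (-(n + 1 : ℝ)⁻¹ * (k + 1))) / laplaceSum b (n + 1 : ℝ)⁻¹) atTop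
      (𝓝 ((gammaMeasure α 1).real (Ioc c d))) := by
  have pos (n : ℕ) : 0 < (n + 1 : ℝ)⁻¹ := by positivity
  have hvar_seq (m : ℕ) := (hvar m).comp tendsto_inv_natCast_add_one_nhdsGT_zero
  obtain ⟨n, ratio_ne⟩ :=
    ((hvar_seq 0).eventually_ne (rpow_pos_of_pos (by positivity) _).ne').exists
  have := neZero_weightedCount hb (div_ne_zero_iff.1 ratio_ne).2
  convert tendsto_tilted_real_Ioc_of_tendsto_mgf_div (X := fun k : ℕ => (k + 1 : ℝ))
    (ν := weightedCount b) (by fun_prop) (ae_of_all _ fun k => by positivity) (fun n => (pos n).le)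
    (fun n => (integrable_weightedCount_iff hb).2 (hsum _ (pos n))) hα (fun m => ?_) c d
    using 2 with n
  · rw [laplaceSum, ← tilted_weightedCount_real hb (hsum _ (pos n))]
    congr 1
    ext k
    exact mem_Ico_floor_iff_inv_mul_mem_Ioc hc hd (by positivity)
  · refine (hvar_seq m).congr fun n => ?_
    rw [Function.comp_apply, mgf_weightedCount hb (hsum _ (pos n)),
      mgf_weightedCount hb (hsum _ (mul_pos m.cast_add_one_pos (pos n)))]

end Series

section Monotone

variable {b : ℕ → ℝ} {c d N : ℝ} {p : ℕ}

lemma card_Ico_floor (hN : 0 ≤ N) (hcd : c ≤ d) :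
    ((Finset.Ico ⌊c * N⌋₊ ⌊d * N⌋₊).card : ℝ) = ⌊d * N⌋₊ - ⌊c * N⌋₊ := by
  rw [Nat.card_Ico, Nat.cast_sub (Nat.floor_mono (mul_le_mul_of_nonneg_right hcd hN))]

lemma card_mul_exp_neg_le_sum_Ico_floor (hb : ∀ k, 0 ≤ b k) (hmono : Monotone b) (hc : 0 ≤ c)
    (hcd : c ≤ d) (hN : 0 < N) (hp : p ≤ ⌊c * N⌋₊) :
    (⌊d * N⌋₊ - ⌊c * N⌋₊) * (b p * rexp (-d))
      ≤ ∑ k ∈ Finset.Ico ⌊c * N⌋₊ ⌊d * N⌋₊, b k * rexp (-N⁻¹ * (k + 1)) := by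
  rw [← card_Ico_floor hN.le hcd, ← nsmul_eq_mul]
  refine Finset.card_nsmul_le_sum _ _ _ fun k hk => ?_
  have := (mem_Ico_floor_iff_inv_mul_mem_Ioc hc (hc.trans hcd) hN).1 hk
  gcongr
  · exact hb k
  · exact hmono (hp.trans (Finset.mem_Ico.1 hk).1)
  · linarith [this.2]

lemma sum_Ico_floor_le_card_mul_exp_neg (hb : ∀ k, 0 ≤ b k) (hmono : Monotone b) (hc : 0 ≤ c)
    (hcd : c ≤ d) (hN : 0 < N) (hp : ⌊d * N⌋₊ ≤ p + 1) :
    ∑ k ∈ Finset.Ico ⌊c * N⌋₊ ⌊d * N⌋₊, b k * rexp (-N⁻¹ * (k + 1))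
      ≤ (⌊d * N⌋₊ - ⌊c * N⌋₊) * (b p * rexp (-c)) := by
  rw [← card_Ico_floor hN.le hcd, ← nsmul_eq_mul]
  refine Finset.sum_le_card_nsmul _ _ _ fun k hk => ?_
  have := (mem_Ico_floor_iff_inv_mul_mem_Ioc hc (hc.trans hcd) hN).1 hk
  gcongr
  · exact hb p
  · exact hmono (Nat.le_of_lt_succ ((Finset.mem_Ico.1 hk).2.trans_le hp))
  · linarith [this.1]

lemma tendsto_floor_mul_sub_floor_mul_div (hc : 0 ≤ c) (hd : 0 ≤ d) :
    Tendsto (fun n : ℕ => (⌊d * (n + 1)⌋₊ - ⌊c * (n + 1)⌋₊ : ℝ) / (n + 1)) atTop (𝓝 (d - c)) := by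
  simp_rw [sub_div]
  exact ((tendsto_nat_floor_mul_div_atTop hd).sub (tendsto_nat_floor_mul_div_atTop hc)).comp
    (tendsto_atTop_add_const_right _ 1 tendsto_natCast_atTop_atTop)

/-- The mean density on `(c, d]` of the probability on the real line with mass proportional to
`b k * e^{-(k+1)/N}` at `(k + 1) / N`, where `N = n + 1`. The length of `(c, d]` is replaced by
the number of points `(k + 1) / N` in it divided by `N`, since monotonicity of `b` bounds the sum
in terms of that number. -/
noncomputable def blockDensity (b : ℕ → ℝ) (c d : ℝ) (n : ℕ) : ℝ :=
  (∑ k ∈ Finset.Ico ⌊c * (n + 1)⌋₊ ⌊d * (n + 1)⌋₊, b k * rexp (-(n + 1 : ℝ)⁻¹ * (k + 1)))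
    / laplaceSum b (n + 1 : ℝ)⁻¹ / ((⌊d * (n + 1)⌋₊ - ⌊c * (n + 1)⌋₊ : ℝ) / (n + 1))

lemma tendsto_blockDensity (hb : ∀ k, 0 ≤ b k)
    (hsum : ∀ s > 0, Summable fun k : ℕ => b k * rexp (-s * (k + 1))) {α : ℝ} (hα : 0 < α)
    (hvar : ∀ m : ℕ, Tendsto (fun s => laplaceSum b ((m + 1) * s) / laplaceSum b s) (𝓝[>] 0)
      (𝓝 ((m + 1 : ℝ) ^ (-α)))) (hc : 0 ≤ c) (hcd : c < d) :
    Tendsto (blockDensity b c d) atTop (𝓝 ((∫ x in c..d, gammaPDFReal α 1 x) / (d - c))) := by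
  rw [← measureReal_gammaMeasure_Ioc hα one_pos hcd.le]
  exact (tendsto_sum_Ico_floor_div_laplaceSum hb hsum hα hvar hc (hc.trans hcd.le)).div
    (tendsto_floor_mul_sub_floor_mul_div hc (hc.trans hcd.le)) (sub_pos.2 hcd).ne'

lemma eventually_floor_mul_sub_floor_mul_pos (hc : 0 ≤ c) (hcd : c < d) :
    ∀ᶠ n : ℕ in atTop, (0 : ℝ) < ⌊d * (n + 1)⌋₊ - ⌊c * (n + 1)⌋₊ := by
  filter_upwards [(tendsto_floor_mul_sub_floor_mul_div hc (hc.trans hcd.le)).eventually_const_lt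
    (sub_pos.2 hcd)] with n hn
  exact (div_pos_iff_of_pos_right n.cast_add_one_pos).1 hn

lemma eventually_le_exp_mul_blockDensity (hb : ∀ k, 0 ≤ b k) (hmono : Monotone b) (hd : 1 < d) :
    ∀ᶠ n : ℕ in atTop,
      (n + 1) * b n / laplaceSum b (n + 1 : ℝ)⁻¹ ≤ rexp d * blockDensity b 1 d n := by
  filter_upwards [eventually_floor_mul_sub_floor_mul_pos zero_le_one hd] with n card_pos
  have block := card_mul_exp_neg_le_sum_Ico_floor hb hmono zero_le_one hd.le
    (n.cast_add_one_pos (α := ℝ)) (p := n) (Nat.le_floor (by linarith))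
  have L_nonneg := laplaceSum_nonneg hb (n + 1 : ℝ)⁻¹
  calc (n + 1) * b n / laplaceSum b (n + 1 : ℝ)⁻¹
      ≤ (n + 1) * (rexp d * (∑ k ∈ Finset.Ico ⌊1 * (n + 1 : ℝ)⌋₊ ⌊d * (n + 1)⌋₊,
          b k * rexp (-(n + 1 : ℝ)⁻¹ * (k + 1))) / (⌊d * (n + 1)⌋₊ - ⌊1 * (n + 1 : ℝ)⌋₊))
        / laplaceSum b (n + 1 : ℝ)⁻¹ := by
        gcongr
        rw [le_div_iff₀ card_pos, ← div_le_iff₀' (exp_pos d), div_eq_mul_inv, ← exp_neg]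
        linarith
    _ = rexp d * blockDensity b 1 d n := by rw [blockDensity, div_div_eq_mul_div]; ring

lemma eventually_exp_mul_blockDensity_le (hb : ∀ k, 0 ≤ b k) (hmono : Monotone b) (hc : 0 ≤ c)
    (hc1 : c < 1) : ∀ᶠ n : ℕ in atTop,
      rexp c * blockDensity b c 1 n ≤ (n + 1) * b n / laplaceSum b (n + 1 : ℝ)⁻¹ := by
  filter_upwards [eventually_floor_mul_sub_floor_mul_pos hc hc1] with n card_pos
  have block := sum_Ico_floor_le_card_mul_exp_neg hb hmono hc hc1.le
    (n.cast_add_one_pos (α := ℝ)) (p := n) (Nat.floor_le_of_le (by simp))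
  have L_nonneg := laplaceSum_nonneg hb (n + 1 : ℝ)⁻¹
  calc rexp c * blockDensity b c 1 n
      = (n + 1) * (rexp c * (∑ k ∈ Finset.Ico ⌊c * (n + 1 : ℝ)⌋₊ ⌊1 * (n + 1 : ℝ)⌋₊,
          b k * rexp (-(n + 1 : ℝ)⁻¹ * (k + 1))) / (⌊1 * (n + 1 : ℝ)⌋₊ - ⌊c * (n + 1 : ℝ)⌋₊))
        / laplaceSum b (n + 1 : ℝ)⁻¹ := by rw [blockDensity, div_div_eq_mul_div]; ring
    _ ≤ (n + 1) * b n / laplaceSum b (n + 1 : ℝ)⁻¹ := by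
        gcongr
        rw [div_le_iff₀ card_pos, ← le_div_iff₀' (exp_pos c), div_eq_mul_inv, ← exp_neg]
        linarith

theorem tendsto_mul_div_laplaceSum (hb : ∀ k, 0 ≤ b k) (hmono : Monotone b)
    (hsum : ∀ s > 0, Summable fun k : ℕ => b k * rexp (-s * (k + 1))) {α : ℝ} (hα : 0 < α)
    (hvar : ∀ m : ℕ, Tendsto (fun s => laplaceSum b ((m + 1) * s) / laplaceSum b s) (𝓝[>] 0)
      (𝓝 ((m + 1 : ℝ) ^ (-α)))) :
    Tendsto (fun n : ℕ => (n + 1) * b n / laplaceSum b (n + 1 : ℝ)⁻¹) atTop (𝓝 (Gamma α)⁻¹) := by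
  have slope_limit := tendsto_exp_mul_slope_gammaPDFReal α
  have lim {c d : ℝ} (hc : 0 ≤ c) (hcd : c < d) := tendsto_blockDensity hb hsum hα hvar hc hcd
  refine tendsto_order.2 ⟨fun u hu => ?_, fun u hu => ?_⟩
  · have near_one := slope_limit.mono_left (nhdsLT_le_nhdsNE 1) |>.eventually_const_lt hu
    obtain ⟨c, hc_slope, hc0, hc1⟩ :=
      (near_one.and (Ioo_mem_nhdsLT zero_lt_one)).exists
    have lt_limit := ((lim hc0.le hc1).const_mul (rexp c)).eventually_const_lt
      (by rwa [slope_comm, slope_def_field, intervalIntegral.integral_same, zero_sub,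
        ← intervalIntegral.integral_symm] at hc_slope)
    filter_upwards [lt_limit, eventually_exp_mul_blockDensity_le hb hmono hc0.le hc1] with n
      using lt_of_lt_of_le
  · have near_one := slope_limit.mono_left (nhdsGT_le_nhdsNE 1) |>.eventually_lt_const hu
    obtain ⟨d, hd_slope, hd⟩ := (near_one.and self_mem_nhdsWithin).exists
    have limit_lt := ((lim zero_le_one hd).const_mul (rexp d)).eventually_lt_const
      (by simpa [slope_def_field] using hd_slope)
    filter_upwards [limit_lt, eventually_le_exp_mul_blockDensity hb hmono hd] with n
      using fun h_lt h_le => h_le.trans_lt h_lt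

end Monotone

section Abel

variable {b : ℕ → ℝ} {α A : ℝ}

lemma tendsto_exp_neg_nhdsGT_zero : Tendsto (fun s : ℝ => rexp (-s)) (𝓝[>] 0) (𝓝[<] 1) := by
  refine tendsto_nhdsWithin_iff.2 ⟨?_, ?_⟩
  · exact ((by fun_prop : Continuous fun s : ℝ => rexp (-s)).tendsto' 0 1 (by simp)).mono_left
      nhdsWithin_le_nhds
  · filter_upwards [self_mem_nhdsWithin] with s hs using by simpa using hs

lemma isEquivalent_one_sub_exp_neg_rpow (α : ℝ) :
    (fun s : ℝ => (1 - rexp (-s)) ^ α) ~[𝓝[>] 0] fun s => s ^ α := by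
  have deriv_at_zero : HasDerivAt (fun s : ℝ => -rexp (-s)) 1 0 := by
    simpa using (hasDerivAt_neg (0 : ℝ)).exp.fun_neg
  have slope_limit := (hasDerivAt_iff_tendsto_slope.1 deriv_at_zero).mono_left (nhdsGT_le_nhdsNE 0)
  have ratio_rpow := slope_limit.rpow_const (p := α) (Or.inl one_ne_zero)
  rw [one_rpow] at ratio_rpow
  refine isEquivalent_of_tendsto_one (ratio_rpow.congr' ?_)
  filter_upwards [self_mem_nhdsWithin] with s (hs : 0 < s)
  rw [Pi.div_apply, ← div_rpow (by simpa using hs.le) hs.le, slope_def_field]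
  simp [neg_add_eq_sub]

lemma isEquivalent_laplaceSum
    (h : (fun x : ℝ => ∑' n, b n * x ^ (n + 1)) ~[𝓝[<] 1] fun x => A / (1 - x) ^ α) :
    laplaceSum b ~[𝓝[>] 0] fun s => A / s ^ α := by
  have laplaceSum_eq :
      laplaceSum b = (fun x : ℝ => ∑' n, b n * x ^ (n + 1)) ∘ fun s => rexp (-s) := by
    ext s
    simp only [laplaceSum, Function.comp_apply, ← exp_nat_mul, Nat.cast_add_one,
      mul_comm (-s)]
  rw [laplaceSum_eq]
  exact (h.comp_tendsto tendsto_exp_neg_nhdsGT_zero).trans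
    (.div .refl (isEquivalent_one_sub_exp_neg_rpow α))

lemma tendsto_laplaceSum_mul_div (hA : A ≠ 0) (h : laplaceSum b ~[𝓝[>] 0] fun s => A / s ^ α)
    {t : ℝ} (ht : 0 < t) :
    Tendsto (fun s => laplaceSum b (t * s) / laplaceSum b s) (𝓝[>] 0) (𝓝 (t ^ (-α))) := by
  have mul_tendsto : Tendsto (t * ·) (𝓝[>] 0) (𝓝[>] 0) := by
    refine tendsto_nhdsWithin_iff.2 ⟨?_, ?_⟩
    · simpa using ((continuous_const_mul t).tendsto 0).mono_left nhdsWithin_le_nhds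
    · filter_upwards [self_mem_nhdsWithin] with s hs using mul_pos ht hs
  refine IsEquivalent.tendsto_const <| ((h.comp_tendsto mul_tendsto).div h).congr_right ?_
  filter_upwards [self_mem_nhdsWithin] with s (hs : 0 < s)
  have := rpow_pos_of_pos hs α
  have := rpow_pos_of_pos ht α
  simp only [Pi.div_apply, Function.comp_apply, mul_rpow ht.le hs.le, rpow_neg ht.le,
    Function.const_apply]
  field_simp

theorem isEquivalent_of_monotone_of_tsum_isEquivalent (hb : ∀ k, 0 ≤ b k) (hmono : Monotone b)
    (hsum : ∀ x ∈ Ioo (0 : ℝ) 1, Summable fun k => b k * x ^ (k + 1)) (hα : 0 < α) (hA : A ≠ 0)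
    (h : (fun x : ℝ => ∑' k, b k * x ^ (k + 1)) ~[𝓝[<] 1] fun x => A / (1 - x) ^ α) :
    b ~[atTop] fun n => A / Gamma α * (n + 1 : ℝ) ^ (α - 1) := by
  have L_equiv := isEquivalent_laplaceSum h
  have hsum_exp (s : ℝ) (hs : 0 < s) : Summable fun k : ℕ => b k * rexp (-s * (k + 1)) := by
    have := hsum (rexp (-s)) ⟨exp_pos _, by simpa using hs⟩
    simpa only [← exp_nat_mul, Nat.cast_add_one, mul_comm (-s)] using this
  have quotient_limit := tendsto_mul_div_laplaceSum hb hmono hsum_exp hα fun m =>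
    tendsto_laplaceSum_mul_div hA L_equiv m.cast_add_one_pos
  have L_seq := L_equiv.comp_tendsto tendsto_inv_natCast_add_one_nhdsGT_zero
  have quotient_equiv := (isEquivalent_const_iff_tendsto
    (inv_ne_zero (Gamma_pos_of_pos hα).ne')).2 quotient_limit
  have N_ne (n : ℕ) : (n + 1 : ℝ) ≠ 0 := n.cast_add_one_ne_zero
  refine (((quotient_equiv.mul L_seq).div
    (.refl : (fun n : ℕ => (n + 1 : ℝ)) ~[atTop] _)).congr_left ?_).congr_right ?_
  · filter_upwards [L_seq.isTheta.eq_zero_iff] with n L_eq_zero_iff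
    have model_ne : A / ((n + 1 : ℝ)⁻¹) ^ α ≠ 0 := by positivity
    have L_ne : laplaceSum b (n + 1 : ℝ)⁻¹ ≠ 0 := mt L_eq_zero_iff.1 model_ne
    simp only [Pi.div_apply, Pi.mul_apply, Function.comp_apply]
    rw [div_mul_cancel₀ _ L_ne, mul_div_cancel_left₀ _ (N_ne n)]
  · refine .of_forall fun n => ?_
    simp only [Pi.div_apply, Pi.mul_apply, Function.comp_apply, Function.const_apply]
    rw [inv_rpow (by positivity), rpow_sub_one (N_ne n)]
    field_simp

theorem hardy_littlewood_tauberian_monotone_general (a : ℕ → ℝ)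
    (hpos : ∀ n, 1 ≤ n → 0 ≤ a n)
    (hmono : ∀ m n : ℕ, 1 ≤ m → m ≤ n → a m ≤ a n)
    (hconv : ∀ x : ℝ, |x| < 1 → Summable (fun n : ℕ => a (n+1) * x ^ (n+1)))
    (α A : ℝ) (hα : 0 < α)
    (hasymp : Tendsto (fun x : ℝ => (∑' n : ℕ, a (n+1) * x ^ (n+1)) / (A / (1-x) ^ α))
      (nhdsWithin 1 (Set.Iio 1)) (nhds 1)) :
    Tendsto (fun n : ℕ => a n / (A * α / Real.Gamma (α+1) * (n:ℝ) ^ (α-1)))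
      atTop (nhds 1) := by
  have hA : A ≠ 0 := by
    rintro rfl
    exact zero_ne_one (tendsto_nhds_unique (by simp) hasymp)
  have coefficient_equiv := isEquivalent_of_monotone_of_tsum_isEquivalent
    (b := fun k => a (k + 1)) (fun k => hpos _ k.succ_pos)
    (fun m n hmn => hmono _ _ m.succ_pos (Nat.succ_le_succ hmn))
    (fun x hx => hconv x (by rw [abs_of_pos hx.1]; exact hx.2)) hα hA
    (isEquivalent_of_tendsto_one hasymp)
  have model_ne : ∀ᶠ n : ℕ in atTop, A / Gamma α * (n + 1 : ℝ) ^ (α - 1) ≠ 0 :=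
    .of_forall fun n => by have := Gamma_pos_of_pos hα; positivity
  rw [← tendsto_add_atTop_iff_nat 1]
  convert (isEquivalent_iff_tendsto_one model_ne).1 coefficient_equiv using 2 with n
  rw [Pi.div_apply, Gamma_add_one hα.ne', mul_comm α, mul_div_mul_right _ _ hα.ne',
    Nat.cast_add_one]

end Abel

theorem hardy_littlewood_tauberian_monotone (a : ℕ → ℝ)
    (hpos : ∀ n, 1 ≤ n → 0 ≤ a n)
    (hmono : ∀ m n : ℕ, 1 ≤ m → m ≤ n → a m ≤ a n)
    (hconv : ∀ x : ℝ, |x| < 1 → Summable (fun n : ℕ => a (n+1) * x ^ (n+1)))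
    (α A : ℝ) (hα : 1 < α) (hA : 0 ≤ A)
    (hasymp : Tendsto (fun x : ℝ => (∑' n : ℕ, a (n+1) * x ^ (n+1)) / (A / (1-x) ^ α))
      (nhdsWithin 1 (Set.Iio 1)) (nhds 1)) :
    Tendsto (fun n : ℕ => a n / (A * α / Real.Gamma (α+1) * (n:ℝ) ^ (α-1)))
      atTop (nhds 1) :=
  hardy_littlewood_tauberian_monotone_general a hpos hmono hconv α A (one_pos.trans hα) hasymp
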